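/- Let G be a connected unicyclic graph whose unique cycle has length ℓ, and suppose exactly k ≥ 2 vertices of the cycle have degree at least 3 in G. If both k and ℓ are even, then mob(G) ≤ k/2 + 2. -/

import Mathlib

/-- `S` is a general position set of `G`: no three distinct vertices of `S`
lie on a common shortest path. -/
def IsGPSet {V : Type*} (G : SimpleGraph V) (S : Finset V) : Prop :=
  ∀ x ∈ S, ∀ y ∈ S, ∀ z ∈ S, x ≠ y → y ≠ z → x ≠ z →
    G.dist x y + G.dist y z ≠ G.dist x z

/-- A legal move: one robot moves from an occupied vertex `u` to an adjacent
unoccupied vertex `v` so that the new set of occupied vertices is again in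
general position. -/
def LegalMove {V : Type*} [DecidableEq V] (G : SimpleGraph V) (S T : Finset V) : Prop :=
  ∃ u ∈ S, ∃ v, v ∉ S ∧ G.Adj u v ∧ T = insert v (S.erase u) ∧ IsGPSet G T

/-- `S` is a mobile general position set of `G`: `S` is in general position and
there is a finite sequence of legal moves starting from `S` after which every
vertex of `G` has been occupied at some stage. -/
def IsMobileGPSet {V : Type*} [DecidableEq V] (G : SimpleGraph V) (S : Finset V) : Prop :=
  IsGPSet G S ∧ ∃ (m : ℕ) (f : ℕ → Finset V), f 0 = S ∧
    (∀ i < m, LegalMove G (f i) (f (i + 1))) ∧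
    ∀ v : V, ∃ i ≤ m, v ∈ f i

/-- The mobile general position number of `G`. -/
noncomputable def mob {V : Type*} [DecidableEq V] (G : SimpleGraph V) : ℕ :=
  sSup {n | ∃ S : Finset V, IsMobileGPSet G S ∧ S.card = n}

/-- The general position number of `G`. -/
noncomputable def gpNum {V : Type*} (G : SimpleGraph V) : ℕ :=
  sSup {n | ∃ S : Finset V, IsGPSet G S ∧ S.card = n}

/-! In a mobile general position set with at least three robots, no two robots ever stand in the
same tree hanging from the cycle: together with a third robot they would have a median vertex
separating the three of them pairwise. This configuration persists under legal moves and keeps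
every robot away from the median, which could then never be visited. A robot standing on the
cycle at `y` therefore forces the attachment points of all other robots, listed clockwise from
`y`, into less than half of the cycle.

Such a cluster also spans less than half of the cycle when read clockwise from `g` or from the
antipode of `g`, for every position `g`. So each configuration with a robot on the cycle leans
to one of these two sides. By discrete continuity `g` can be chosen so that both semicircles
starting at `g` and at its antipode contain at most half of the branch vertices, rounded up.
Since at most two robots are on the cycle, a larger number of robots has off-cycle robots
attached in both semicircles, so it cannot lean to both sides. The side is then invariant under
legal moves, although a robot at `g` forces one side and a robot at the antipode of `g` forces
the other. -/

section CyclicOrder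

lemma val_sub_add_val_sub {n : ℕ} [NeZero n] (a b c : ZMod n) :
    (a - b).val + (b - c).val = (a - c).val ∨ (a - b).val + (b - c).val = (a - c).val + n := by
  rw [← sub_add_sub_cancel a b c]
  rcases lt_or_ge ((a - b).val + (b - c).val) n with hlt | hle
  · exact .inl (ZMod.val_add_of_lt hlt).symm
  · exact .inr (ZMod.val_add_val_of_le hle)

lemma add_one_ne_sub_one {n : ℕ} (hn : 3 ≤ n) (i : ZMod n) : i + 1 ≠ i - 1 := by
  intro h
  have htwo : ((2 : ℕ) : ZMod n) = 0 := by linear_combination h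
  have := Nat.le_of_dvd two_pos ((ZMod.natCast_eq_zero_iff 2 n).mp htwo)
  omega

variable {m : ℕ}

/-- The position diametrically opposite to `g` on a cycle of length `2 * m`. -/
def antipode (g : ZMod (2 * m)) : ZMod (2 * m) := g + m

/-- A set of positions on a cycle of length `2 * m` whose elements, listed clockwise starting
from `g`, spread over less than half of the cycle. Equivalently, the set lies in an arc with at
most `m` vertices that does not cross the edge from `g - 1` to `g`. -/
def ClusteredFrom (g : ZMod (2 * m)) (A : Set (ZMod (2 * m))) : Prop :=
  ∀ i ∈ A, ∀ j ∈ A, (j - g).val < (i - g).val + m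

lemma ClusteredFrom.mono {g : ZMod (2 * m)} {A B : Set (ZMod (2 * m))}
    (hB : ClusteredFrom g B) (hAB : A ⊆ B) : ClusteredFrom g A :=
  fun i hi j hj => hB i (hAB hi) j (hAB hj)

variable [NeZero m]

lemma antipode_sub_val (g : ZMod (2 * m)) : (antipode g - g).val = m := by
  rw [antipode, add_sub_cancel_left]
  exact ZMod.val_natCast_of_lt (by have := NeZero.pos m; omega)

lemma val_sub_antipode (g i : ZMod (2 * m)) :
    ((i - g).val < m ∧ (i - antipode g).val = (i - g).val + m) ∨
      (m ≤ (i - g).val ∧ (i - antipode g).val + m = (i - g).val) := by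
  have hsplit := val_sub_add_val_sub i (antipode g) g
  rw [antipode_sub_val] at hsplit
  have := ZMod.val_lt (i - (antipode g))
  have := ZMod.val_lt (i - g)
  omega

lemma ClusteredFrom.exists_crossing {g y : ZMod (2 * m)} {A : Set (ZMod (2 * m))}
    (hy : ClusteredFrom y A) (hg : ¬ ClusteredFrom g A) :
    ∃ i ∈ A, ∃ j ∈ A, (i - g).val < (y - g).val ∧ (y - g).val ≤ (j - g).val ∧
      (i - g).val + m < (j - g).val := by
  simp only [ClusteredFrom, not_forall, not_lt] at hg
  obtain ⟨i, hi, j, hj, hij⟩ := hg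
  refine ⟨i, hi, j, hj, ?_⟩
  have := hy i hi j hj
  have := hy j hj i hi
  have hrebase (k : ZMod (2 * m)) := And.intro (val_sub_add_val_sub k y g) (ZMod.val_lt (k - g))
  have := hrebase i
  have := hrebase j
  have := ZMod.val_lt (j - y)
  have := ZMod.val_lt (i - y)
  omega

lemma ClusteredFrom.from_or_from_antipode {y : ZMod (2 * m)} {A : Set (ZMod (2 * m))}
    (hA : ClusteredFrom y A) (g : ZMod (2 * m)) :
    ClusteredFrom g A ∨ ClusteredFrom (antipode g) A := by
  by_contra! h
  obtain ⟨i, hi, j, hj, hcross⟩ := hA.exists_crossing h.1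
  obtain ⟨i', hi', j', hj', hcross'⟩ := hA.exists_crossing h.2
  have hrebase (k : ZMod (2 * m)) := And.intro (val_sub_add_val_sub k y g) (ZMod.val_lt (k - y))
  have := val_sub_antipode g y
  rcases lt_or_ge (y - g).val m with hlow | hhigh
  · have := hA j' hj' i hi
    have := hrebase i
    have := hrebase j'
    have := val_sub_antipode g j'
    omega
  · have := hA j hj i' hi'
    have := hrebase i'
    have := hrebase j
    have := val_sub_antipode g i'
    have := ZMod.val_lt (j - g)
    omega

lemma ClusteredFrom.not_antipode {g i j : ZMod (2 * m)} {A : Set (ZMod (2 * m))}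
    (hA : ClusteredFrom g A) (hi : i ∈ A) (hj : j ∈ A)
    (hlow : (i - g).val < m) (hhigh : m ≤ (j - g).val) : ¬ ClusteredFrom (antipode g) A := by
  intro hA'
  have := hA i hi j hj
  have := hA' j hj i hi
  have := val_sub_antipode g i
  have := val_sub_antipode g j
  omega

lemma exists_between_of_succ_le_add_one {f : ℕ → ℕ} (hf : ∀ i, f (i + 1) ≤ f i + 1)
    {a b N : ℕ} (hab : a ≤ b) (h0 : f 0 ≤ b) (hN : a ≤ f N) : ∃ i, a ≤ f i ∧ f i ≤ b := by
  classical
  have hex : ∃ i, a ≤ f i := ⟨N, hN⟩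
  refine ⟨Nat.find hex, Nat.find_spec hex, ?_⟩
  rcases Nat.eq_zero_or_pos (Nat.find hex) with hzero | hpos
  · rwa [hzero]
  · have hprev : ¬ a ≤ f (Nat.find hex - 1) := Nat.find_min hex (by omega)
    have hstep := hf (Nat.find hex - 1)
    rw [Nat.sub_add_cancel hpos] at hstep
    omega

/-- The number of elements of `B` among `g, g + 1, …, g + (m - 1)`. -/
def halfCount (B : Finset (ZMod (2 * m))) (g : ZMod (2 * m)) : ℕ :=
  (B.filter fun i => (i - g).val < m).card

lemma halfCount_add_one_le (B : Finset (ZMod (2 * m))) (g : ZMod (2 * m)) :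
    halfCount B (g + 1) ≤ halfCount B g + 1 := by
  refine le_trans (Finset.card_le_card fun i hi => ?_) (Finset.card_insert_le (antipode g) _)
  simp only [Finset.mem_insert, Finset.mem_filter] at hi ⊢
  obtain ⟨hiB, hlt⟩ := hi
  by_cases hi' : (i - g).val < m
  · exact .inr ⟨hiB, hi'⟩
  · have hle : (i - g).val ≤ (i - (g + 1)).val + 1 := by
      have := NeZero.pos m
      have hone : (1 : ZMod (2 * m)).val = 1 := by
        simpa using ZMod.val_natCast_of_lt (n := 2 * m) (a := 1) (by omega)
      have := ZMod.val_add_le (i - (g + 1)) 1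
      rwa [hone, ← sub_sub, sub_add_cancel, sub_sub] at this
    have hval : (i - g).val = (antipode g - g).val := by rw [antipode_sub_val]; omega
    exact .inl (sub_left_injective (ZMod.val_injective _ hval))

lemma halfCount_antipode (B : Finset (ZMod (2 * m))) (g : ZMod (2 * m)) :
    halfCount B (antipode g) = (B.filter fun i => m ≤ (i - g).val).card := by
  refine congrArg Finset.card (Finset.filter_congr fun i _ => ?_)
  have := val_sub_antipode g i
  have := ZMod.val_lt (i - g)
  omega

lemma halfCount_add_halfCount_antipode (B : Finset (ZMod (2 * m))) (g : ZMod (2 * m)) :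
    halfCount B g + halfCount B (antipode g) = B.card := by
  simp only [halfCount_antipode, ← not_lt]
  exact Finset.card_filter_add_card_filter_not _

lemma exists_halfCount_le {K : ℕ} (B : Finset (ZMod (2 * m))) (hB : B.card ≤ 2 * K) :
    ∃ g, halfCount B g ≤ K ∧ halfCount B (antipode g) ≤ K := by
  obtain ⟨g₀, hg₀⟩ : ∃ g, halfCount B g ≤ K := by
    have := halfCount_add_halfCount_antipode B 0
    by_cases h0 : halfCount B 0 ≤ K
    · exact ⟨0, h0⟩
    · exact ⟨antipode 0, by omega⟩
  have hsum := fun g => halfCount_add_halfCount_antipode B g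
  have hstep (i : ℕ) : halfCount B (g₀ + (i + 1 : ℕ)) ≤ halfCount B (g₀ + i) + 1 := by
    rw [Nat.cast_succ, ← add_assoc]
    exact halfCount_add_one_le B _
  obtain ⟨i, hlow, hhigh⟩ := exists_between_of_succ_le_add_one (f := fun i => halfCount B (g₀ + i))
    (a := B.card - K) (b := K) (N := m) hstep (by omega) (by simpa using hg₀)
    (by have := hsum g₀; rw [antipode] at this; omega)
  exact ⟨g₀ + i, hhigh, by have := hsum (g₀ + i); omega⟩

end CyclicOrder

open SimpleGraph

section Separation

variable {V : Type*} {G : SimpleGraph V} {q x y : V}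

/-- Every walk from `x` to `y` passes through `q`; this includes the cases `q = x` and `q = y`. -/
def Separates (G : SimpleGraph V) (q x y : V) : Prop := ∀ w : G.Walk x y, q ∈ w.support

namespace Separates

lemma symm (h : Separates G q x y) : Separates G q y x :=
  fun w => by simpa using h w.reverse

lemma left (x y : V) : Separates G x x y := fun w => w.start_mem_support

lemma trans {p : V} (h : Separates G p x y) (hq : Separates G q p y) : Separates G q x y := by
  classical
  exact fun w => w.support_dropUntil_subset_support (h w) (hq (w.dropUntil p (h w)))

lemma of_adj_left {x' : V} (h : Separates G q x y) (hq : q ≠ x) (hx : G.Adj x x') :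
    Separates G q x' y := by
  intro w
  have hmem := h (Walk.cons hx w)
  rw [Walk.support_cons, List.mem_cons] at hmem
  exact hmem.resolve_left hq

lemma dist_add_dist (hG : G.Connected) (h : Separates G q x y) :
    G.dist x q + G.dist q y = G.dist x y := by
  classical
  obtain ⟨w, hw⟩ := hG.exists_walk_length_eq_dist x y
  have hlen := congrArg Walk.length (w.take_spec (h w))
  rw [Walk.length_append, hw] at hlen
  have := dist_le (w.takeUntil q (h w))
  have := dist_le (w.dropUntil q (h w))
  have := hG.dist_triangle (u := x) (v := q) (w := y)
  omega

end Separates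

/-- A vertex `q` that pairwise separates at least three elements of `S`. -/
def IsHub (G : SimpleGraph V) (q : V) (S : Finset V) : Prop :=
  ∃ A ⊆ S, 3 ≤ A.card ∧ (A : Set V).Pairwise (Separates G q)

lemma IsHub.notMem (hG : G.Connected) {S : Finset V} (hS : IsGPSet G S) (h : IsHub G q S) :
    q ∉ S := by
  classical
  obtain ⟨A, hAS, hcard, hA⟩ := h
  intro hq
  have hrest : 1 < (A.erase q).card := by
    have := Finset.pred_card_le_card_erase (s := A) (a := q)
    omega
  obtain ⟨a, ha, b, hb, hab⟩ := Finset.one_lt_card.mp hrest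
  rw [Finset.mem_erase] at ha hb
  exact hS a (hAS ha.2) q hq b (hAS hb.2) ha.1 hb.1.symm hab
    ((hA ha.2 hb.2 hab).dist_add_dist hG)

end Separation

section Moves

variable {V : Type*} [DecidableEq V] {G : SimpleGraph V} {S T : Finset V}

namespace LegalMove

lemma isGPSet (h : LegalMove G S T) : IsGPSet G T := by
  obtain ⟨_, _, _, _, _, rfl, hT⟩ := h
  exact hT

lemma symm (hS : IsGPSet G S) (h : LegalMove G S T) : LegalMove G T S := by
  obtain ⟨u, hu, v, hv, huv, rfl, -⟩ := h
  refine ⟨v, Finset.mem_insert_self v _, u, ?_, huv.symm, ?_, hS⟩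
  · simp [huv.ne]
  · rw [Finset.erase_insert (by simp [hv]), Finset.insert_erase hu]

lemma card_eq (h : LegalMove G S T) : T.card = S.card := by
  obtain ⟨u, hu, v, hv, _, rfl, -⟩ := h
  rw [Finset.card_insert_of_notMem (by simp [hv]), Finset.card_erase_add_one hu]

lemma isHub (hG : G.Connected) (hS : IsGPSet G S) {q : V} (h : LegalMove G S T)
    (hq : IsHub G q S) : IsHub G q T := by
  have hqS : q ∉ S := hq.notMem hG hS
  obtain ⟨u, hu, v, hv, huv, rfl, -⟩ := h
  obtain ⟨A, hAS, hcard, hA⟩ := hq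
  by_cases huA : u ∈ A
  · refine ⟨insert v (A.erase u), Finset.insert_subset_insert v (Finset.erase_subset_erase u hAS),
      ?_, ?_⟩
    · rwa [Finset.card_insert_of_notMem fun h => hv (hAS (Finset.mem_of_mem_erase h)),
        Finset.card_erase_add_one huA]
    · rw [Finset.coe_insert, Set.pairwise_insert]
      refine ⟨hA.mono (by simp), fun x hx _ => ?_⟩
      rw [Finset.mem_coe, Finset.mem_erase] at hx
      have hsep := (hA huA hx.2 hx.1.symm).of_adj_left (fun h => hqS (h ▸ hu)) huv
      exact ⟨hsep, hsep.symm⟩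
  · refine ⟨A, fun x hx => ?_, hcard, hA⟩
    exact Finset.mem_insert_of_mem (Finset.mem_erase.mpr ⟨fun h => huA (h ▸ hx), hAS hx⟩)

end LegalMove

/-- A general position set from which, for every vertex `v`, legal moves can bring a robot
to `v`. Unlike mobility, this only asks for one sequence of moves per vertex, which makes it
stable under legal moves. -/
structure IsRoving (G : SimpleGraph V) (S : Finset V) : Prop where
  isGPSet : IsGPSet G S
  exists_reaches (v : V) : ∃ T, Relation.ReflTransGen (LegalMove G) S T ∧ v ∈ T

lemma IsMobileGPSet.isRoving (hS : IsMobileGPSet G S) : IsRoving G S := by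
  obtain ⟨hgp, N, f, rfl, hmove, hvisit⟩ := hS
  have hreach (i : ℕ) (hi : i ≤ N) : Relation.ReflTransGen (LegalMove G) (f 0) (f i) := by
    induction i with
    | zero => exact .refl
    | succ i ih => exact (ih (by omega)).tail (hmove i (by omega))
  refine ⟨hgp, fun v => ?_⟩
  obtain ⟨i, hi, hv⟩ := hvisit v
  exact ⟨f i, hreach i hi, hv⟩

namespace IsRoving

lemma of_legalMove (hS : IsRoving G S) (h : LegalMove G S T) : IsRoving G T := by
  refine ⟨h.isGPSet, fun v => ?_⟩
  obtain ⟨R, hR, hv⟩ := hS.exists_reaches v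
  exact ⟨R, .head (h.symm hS.isGPSet) hR, hv⟩

lemma exists_isRoving_mem (hS : IsRoving G S) {P : Finset V → Prop}
    (hP : ∀ S T, IsRoving G S → LegalMove G S T → P S → P T) (hPS : P S) (v : V) :
    ∃ T, IsRoving G T ∧ P T ∧ v ∈ T := by
  obtain ⟨T, hT, hv⟩ := hS.exists_reaches v
  suffices h : IsRoving G T ∧ P T from ⟨T, h.1, h.2, hv⟩
  clear hv
  induction hT with
  | refl => exact ⟨hS, hPS⟩
  | tail _ h ih => exact ⟨ih.1.of_legalMove h, hP _ _ ih.1 h ih.2⟩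

lemma not_isHub (hS : IsRoving G S) (hG : G.Connected) (q : V) : ¬ IsHub G q S := by
  intro hq
  obtain ⟨T, hT, hqT, hmem⟩ := hS.exists_isRoving_mem (P := IsHub G q)
    (fun _ _ hS h hq => h.isHub hG hS.isGPSet hq) hq q
  exact hqT.notMem hG hT.isGPSet hmem

end IsRoving

end Moves

section Structure

variable {V : Type*} {G : SimpleGraph V}

/-- A presentation of a unicyclic graph: its edges are exactly the pairs `v, succ v`, where
`succ` advances along the cycle `cyc 0, cyc 1, …, cyc (n - 1)` on the vertices of the cycle and
steps towards the cycle from all others. The number of steps needed is `depth v`. -/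
structure CycleFlow {n : ℕ} (G : SimpleGraph V) (cyc : ZMod n → V) where
  succ : V → V
  depth : V → ℕ
  cyc_injective : Function.Injective cyc
  adj_succ (v : V) : G.Adj v (succ v)
  eq_succ_or_eq_succ_of_adj {u v : V} : G.Adj u v → v = succ u ∨ u = succ v
  succ_cyc (i : ZMod n) : succ (cyc i) = cyc (i + 1)
  depth_eq_zero_iff {v : V} : depth v = 0 ↔ v ∈ Set.range cyc
  depth_succ (v : V) : depth (succ v) = depth v - 1

namespace CycleFlow

variable {n : ℕ} {cyc : ZMod n → V} (D : CycleFlow G cyc) {u v : V}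

/-- The index of the cycle vertex to which the tree containing `v` is attached. -/
noncomputable def root (v : V) : ZMod n := Function.invFun cyc (D.succ^[D.depth v] v)

lemma depth_cyc (i : ZMod n) : D.depth (cyc i) = 0 := D.depth_eq_zero_iff.mpr ⟨i, rfl⟩

@[simp]
lemma root_cyc (i : ZMod n) : D.root (cyc i) = i := by
  rw [root, D.depth_cyc, Function.iterate_zero_apply, Function.leftInverse_invFun D.cyc_injective]

lemma cyc_root (hv : D.depth v = 0) : cyc (D.root v) = v := by
  obtain ⟨i, rfl⟩ := D.depth_eq_zero_iff.mp hv
  rw [D.root_cyc]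

lemma root_succ_of_depth_eq_zero (hv : D.depth v = 0) : D.root (D.succ v) = D.root v + 1 := by
  obtain ⟨i, rfl⟩ := D.depth_eq_zero_iff.mp hv
  rw [D.succ_cyc, D.root_cyc, D.root_cyc]

lemma root_succ_of_depth_ne_zero (hv : D.depth v ≠ 0) : D.root (D.succ v) = D.root v := by
  rw [root, root, D.depth_succ, ← Function.iterate_succ_apply, Nat.succ_eq_add_one,
    Nat.sub_add_cancel (Nat.pos_of_ne_zero hv)]

lemma depth_iterate_succ (k : ℕ) (v : V) : D.depth (D.succ^[k] v) = D.depth v - k := by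
  induction k with
  | zero => rfl
  | succ k ih => rw [Function.iterate_succ_apply', D.depth_succ, ih, Nat.sub_sub]

lemma root_eq_or_of_adj (h : G.Adj u v) : D.root v = D.root u ∨
    D.depth u = 0 ∧ D.depth v = 0 ∧
      (D.root v = D.root u + 1 ∨ D.root u = D.root v + 1) := by
  have hsucc (w : V) : D.root (D.succ w) = D.root w ∨
      D.depth w = 0 ∧ D.depth (D.succ w) = 0 ∧ D.root (D.succ w) = D.root w + 1 := by
    by_cases hw : D.depth w = 0
    · exact .inr ⟨hw, by rw [D.depth_succ, hw], D.root_succ_of_depth_eq_zero hw⟩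
    · exact .inl (D.root_succ_of_depth_ne_zero hw)
  rcases D.eq_succ_or_eq_succ_of_adj h with rfl | rfl
  · rcases hsucc u with h | ⟨hu, hv, h⟩
    exacts [.inl h, .inr ⟨hu, hv, .inl h⟩]
  · rcases hsucc v with h | ⟨hv, hu, h⟩
    exacts [.inl h.symm, .inr ⟨hu, hv, .inr h⟩]

lemma three_le_degree [Fintype V] [DecidableRel G.Adj] (hn : 3 ≤ n) (hv : D.depth v ≠ 0) :
    3 ≤ G.degree (cyc (D.root v)) := by
  classical
  obtain ⟨d, hd⟩ := Nat.exists_eq_succ_of_ne_zero hv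
  induction d generalizing v with
  | succ d ih =>
    rw [← D.root_succ_of_depth_ne_zero hv]
    have hd' : D.depth (D.succ v) = d + 1 := by rw [D.depth_succ, hd]; rfl
    exact ih (by omega) hd'
  | zero =>
    obtain ⟨i, hi⟩ : D.succ v ∈ Set.range cyc :=
      D.depth_eq_zero_iff.mp (by rw [D.depth_succ, hd])
    have hoff (j : ZMod n) : v ≠ cyc j := fun h => hv (h ▸ D.depth_cyc j)
    have hopp : cyc (i + 1) ≠ cyc (i - 1) := D.cyc_injective.ne (add_one_ne_sub_one hn i)
    have hnbr : {v, cyc (i + 1), cyc (i - 1)} ⊆ G.neighborFinset (cyc i) := by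
      have hnext (j : ZMod n) : G.Adj (cyc j) (cyc (j + 1)) := D.succ_cyc j ▸ D.adj_succ (cyc j)
      have hprev := (hnext (i - 1)).symm
      rw [sub_add_cancel] at hprev
      simp only [Finset.insert_subset_iff, Finset.singleton_subset_iff, mem_neighborFinset]
      exact ⟨hi ▸ (D.adj_succ v).symm, hnext i, hprev⟩
    rw [← D.root_succ_of_depth_ne_zero hv, ← hi, D.root_cyc, ← card_neighborFinset_eq_degree,
      ← Finset.card_eq_three.mpr ⟨v, _, _, hoff _, hoff _, hopp, rfl⟩]
    exact Finset.card_le_card hnbr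

end CycleFlow

lemma exists_depth_parent (hG : G.Connected) {C : Set V} (hC : C.Nonempty) :
    ∃ (depth : V → ℕ) (parent : V → V), (∀ v, depth v = 0 ↔ v ∈ C) ∧
      ∀ v ∉ C, G.Adj v (parent v) ∧ depth (parent v) + 1 = depth v := by
  let depth (v : V) : ℕ := sInf (G.dist v '' C)
  have hattained (v : V) : ∃ c ∈ C, G.dist v c = depth v := Nat.sInf_mem (hC.image _)
  have hle (v : V) {c : V} (hc : c ∈ C) : depth v ≤ G.dist v c := Nat.sInf_le ⟨c, hc, rfl⟩
  have hparent (v : V) : ∃ u, v ∉ C → G.Adj v u ∧ depth u + 1 = depth v := by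
    by_cases hv : v ∈ C
    · exact ⟨v, absurd hv⟩
    obtain ⟨c, hc, hdist⟩ := hattained v
    obtain ⟨w, hw⟩ := hG.exists_walk_length_eq_dist v c
    cases w with
    | nil => exact absurd hc hv
    | @cons _ u _ huv p =>
      refine ⟨u, fun _ => ⟨huv, ?_⟩⟩
      obtain ⟨c', hc', hdist'⟩ := hattained u
      have := hle u hc
      have := hle v hc'
      have := dist_le p
      have := dist_le (p.cons huv)
      have := hG.dist_triangle (u := v) (v := u) (w := c')
      rw [dist_eq_one_iff_adj.mpr huv] at this
      rw [Walk.length_cons] at hw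
      omega
  choose parent hparent using hparent
  refine ⟨depth, parent, fun v => ⟨fun hv => ?_, fun hv => ?_⟩, hparent⟩
  · obtain ⟨c, hc, hdist⟩ := hattained v
    rwa [hG.dist_eq_zero_iff.mp (hdist.trans hv)]
  · simpa using hle v hv

lemma eq_or_eq_of_adj_of_card_edgeFinset [Fintype V] [DecidableRel G.Adj] {f : V → V}
    (hf : ∀ v, G.Adj v (f v)) (hff : ∀ v, f (f v) ≠ v)
    (hcard : G.edgeFinset.card ≤ Fintype.card V) {u v : V} (huv : G.Adj u v) :
    v = f u ∨ u = f v := by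
  classical
  have hinj : Function.Injective fun v => s(v, f v) := by
    intro v w h
    rcases Sym2.eq_iff.mp h with h | ⟨hv, hw⟩
    · exact h.1
    · exact absurd (hw ▸ hv.symm) (hff v)
  have himage : Finset.univ.image (fun v => s(v, f v)) = G.edgeFinset := by
    refine Finset.eq_of_subset_of_card_le (fun e he => ?_) ?_
    · obtain ⟨v, -, rfl⟩ := Finset.mem_image.mp he
      exact mem_edgeFinset.mpr (hf v)
    · rwa [Finset.card_image_of_injective _ hinj]
  have hmem : s(u, v) ∈ G.edgeFinset := mem_edgeFinset.mpr huv
  rw [← himage, Finset.mem_image] at hmem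
  obtain ⟨w, -, hw⟩ := hmem
  rcases Sym2.eq_iff.mp hw with ⟨rfl, h⟩ | ⟨rfl, h⟩
  exacts [.inl h.symm, .inr h.symm]

lemma nonempty_cycleFlow [Fintype V] [DecidableRel G.Adj] (hG : G.Connected)
    (hcard : G.edgeFinset.card ≤ Fintype.card V) {n : ℕ} (hn : 3 ≤ n) {cyc : ZMod n → V}
    (hinj : Function.Injective cyc) (hadj : ∀ i, G.Adj (cyc i) (cyc (i + 1))) :
    Nonempty (CycleFlow G cyc) := by
  classical
  obtain ⟨depth, parent, hdepth, hparent⟩ := exists_depth_parent hG (Set.range_nonempty cyc)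
  let succ (v : V) : V :=
    if v ∈ Set.range cyc then cyc (Function.invFun cyc v + 1) else parent v
  have hcyc (i : ZMod n) : succ (cyc i) = cyc (i + 1) := by
    simp only [succ, Set.mem_range_self, if_true, Function.leftInverse_invFun hinj i]
  have hoff {v : V} (hv : v ∉ Set.range cyc) : succ v = parent v := if_neg hv
  have hsucc (v : V) : G.Adj v (succ v) ∧ depth (succ v) = depth v - 1 := by
    by_cases hv : v ∈ Set.range cyc
    · obtain ⟨i, rfl⟩ := hv
      simp only [hcyc, hadj, (hdepth _).mpr (Set.mem_range_self _), true_and, Nat.zero_sub]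
    · rw [hoff hv, ← (hparent v hv).2, Nat.add_sub_cancel]
      exact ⟨(hparent v hv).1, rfl⟩
  have hsucc_succ (v : V) : succ (succ v) ≠ v := by
    intro h
    have hdepth_v : depth v = depth v - 1 - 1 := by
      rw [← (hsucc v).2, ← (hsucc (succ v)).2, h]
    obtain ⟨i, rfl⟩ := (hdepth v).mp (by omega)
    rw [hcyc, hcyc] at h
    exact add_one_ne_sub_one hn (i + 1) ((hinj h).trans (add_sub_cancel_right i 1).symm)
  exact ⟨succ, depth, hinj, fun v => (hsucc v).1,
    eq_or_eq_of_adj_of_card_edgeFinset (fun v => (hsucc v).1) hsucc_succ hcard, hcyc,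
    hdepth _, fun v => (hsucc v).2⟩

lemma exists_cyclic_parametrization {v₀ : V} {c : G.Walk v₀ v₀} (hc : c.IsCycle) {n : ℕ}
    (hn : c.length = n) :
    ∃ cyc : ZMod n → V, Function.Injective cyc ∧ (∀ i, G.Adj (cyc i) (cyc (i + 1))) ∧
      Set.range cyc = {v | v ∈ c.support} := by
  subst hn
  have hthree := hc.three_le_length
  have : NeZero c.length := ⟨by omega⟩
  let cyc (i : ZMod c.length) : V := c.getVert i.val
  have hcast {k : ℕ} (hk : k ≤ c.length) : cyc k = c.getVert k := by
    rcases hk.lt_or_eq with hlt | heq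
    · simp only [cyc, ZMod.val_natCast_of_lt hlt]
    · simp only [cyc, heq, ZMod.natCast_self, ZMod.val_zero, Walk.getVert_zero,
        Walk.getVert_length]
  have hlt (i : ZMod c.length) := ZMod.val_lt i
  refine ⟨cyc, fun i j h => ?_, fun i => ?_, Set.ext fun v => ?_⟩
  · refine ZMod.val_injective _ (hc.getVert_injOn' ?_ ?_ h) <;>
    · rw [Set.mem_ofPred_eq]
      exact Nat.le_sub_one_of_lt (ZMod.val_lt _)
  · have hnext : cyc (i + 1) = c.getVert (i.val + 1) := by
      rw [← hcast (hlt i), Nat.cast_succ, ZMod.natCast_zmod_val]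
    rw [hnext]
    exact c.adj_getVert_succ (hlt i)
  · rw [Set.mem_ofPred_eq, Walk.mem_support_iff_exists_getVert]
    constructor
    · rintro ⟨i, rfl⟩
      exact ⟨i.val, rfl, (hlt i).le⟩
    · rintro ⟨k, rfl, hk⟩
      exact ⟨k, hcast hk⟩

end Structure

section Geometry

variable {V : Type*} {G : SimpleGraph V}

namespace CycleFlow

variable {n : ℕ} {cyc : ZMod n → V} (D : CycleFlow G cyc) {u v x y z : V}

/-- The vertices of the tree hanging at `a`; for `a` on the cycle this is the whole graph. -/
def below (a : V) : Set V := {v | ∃ k, D.succ^[k] v = a}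

lemma mem_below_self (a : V) : a ∈ D.below a := ⟨0, rfl⟩

lemma depth_lt_of_mem_below {a v : V} (hv : v ∈ D.below a) (hva : v ≠ a)
    (ha : D.depth a ≠ 0) : D.depth a < D.depth v := by
  obtain ⟨k, rfl⟩ := hv
  rw [D.depth_iterate_succ] at ha ⊢
  have hk : k ≠ 0 := fun h => hva (by rw [h, Function.iterate_zero_apply])
  omega

lemma eq_and_eq_succ_of_adj {a : V} (h : G.Adj u v) (hu : u ∈ D.below a)
    (hv : v ∉ D.below a) : u = a ∧ v = D.succ a := by
  obtain ⟨k, hk⟩ := hu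
  rcases D.eq_succ_or_eq_succ_of_adj h with rfl | rfl
  · cases k with
    | zero => exact ⟨hk, congrArg D.succ hk⟩
    | succ k => exact absurd ⟨k, hk⟩ hv
  · exact absurd ⟨k + 1, hk⟩ hv

lemma separates_of_mem_below {a : V} (hx : x ∈ D.below a) (hy : y ∉ D.below a) :
    Separates G a x y ∧ Separates G (D.succ a) x y := by
  have hcross (w : G.Walk x y) : a ∈ w.support ∧ D.succ a ∈ w.support := by
    obtain ⟨d, hd, hin, hout⟩ := w.exists_boundary_dart (D.below a) hx hy
    obtain ⟨hfst, hsnd⟩ := D.eq_and_eq_succ_of_adj d.adj hin hout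
    exact ⟨hfst ▸ w.dart_fst_mem_support_of_mem_darts hd,
      hsnd ▸ w.dart_snd_mem_support_of_mem_darts hd⟩
  exact ⟨fun w => (hcross w).1, fun w => (hcross w).2⟩

lemma exists_separates_of_root_eq {a b : V} (h : D.root a = D.root b) (d : V) :
    ∃ q, Separates G q a b ∧ Separates G q b d ∧ Separates G q a d := by
  induction hN : D.depth a + D.depth b using Nat.strong_induction_on generalizing a b with
  | _ N ih =>
  wlog hle : D.depth b ≤ D.depth a generalizing a b
  · obtain ⟨q, hba, had, hbd⟩ := this h.symm (by rwa [add_comm]) (le_of_not_ge hle)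
    exact ⟨q, hba.symm, hbd, had⟩
  rcases eq_or_ne b a with rfl | hne
  · exact ⟨b, .left _ _, .left _ _, .left _ _⟩
  have ha : D.depth a ≠ 0 := fun ha => hne <| by
    rw [← D.cyc_root ha, ← D.cyc_root (by omega : D.depth b = 0), h]
  have hb : b ∉ D.below a := fun hb => by
    have := D.depth_lt_of_mem_below hb hne ha
    omega
  have hexit {y : V} (hy : y ∉ D.below a) : Separates G (D.succ a) a y :=
    (D.separates_of_mem_below (D.mem_below_self a) hy).2
  by_cases hd : d ∈ D.below a
  · exact ⟨a, .left _ _, (D.separates_of_mem_below hd hb).1.symm, .left _ _⟩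
  · have hdepth := D.depth_succ a
    obtain ⟨q, hab, hbd, had⟩ := ih (D.depth (D.succ a) + D.depth b) (by omega)
      ((D.root_succ_of_depth_ne_zero ha).trans h) rfl
    exact ⟨q, (hexit hb).trans hab, hbd, (hexit hd).trans had⟩

lemma separates_cyc_root (h : D.root x ≠ D.root z) : Separates G (cyc (D.root x)) x z := by
  intro w
  obtain ⟨d, hd, hin, hout⟩ := w.exists_boundary_dart {v | D.root v = D.root x} rfl h.symm
  rw [Set.mem_ofPred_eq] at hin hout
  rcases D.root_eq_or_of_adj d.adj with heq | ⟨hdepth, -, -⟩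
  · exact absurd (heq.trans hin) hout
  · rw [← hin, D.cyc_root hdepth]
    exact w.dart_fst_mem_support_of_mem_darts hd

lemma dist_eq_of_root_ne (hG : G.Connected) (h : D.root x ≠ D.root z) :
    G.dist x z = G.dist x (cyc (D.root x)) + G.dist (cyc (D.root x)) (cyc (D.root z)) +
      G.dist (cyc (D.root z)) z := by
  have hx : Separates G (cyc (D.root x)) x z := D.separates_cyc_root h
  have hz : Separates G (cyc (D.root z)) (cyc (D.root x)) z :=
    (D.separates_cyc_root (by rw [D.root_cyc]; exact h.symm)).symm
  rw [add_assoc, hz.dist_add_dist hG, hx.dist_add_dist hG]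

variable [NeZero n]

include D

lemma natAbs_valMinAbs_root_sub_le_length (w : G.Walk u v) :
    (D.root v - D.root u).valMinAbs.natAbs ≤ w.length := by
  induction w with
  | nil => simp
  | @cons u u' v huu' w ih =>
    have hstep : (D.root u' - D.root u).valMinAbs.natAbs ≤ 1 := by
      have hone : (1 : ZMod n).valMinAbs.natAbs ≤ 1 := by
        rw [ZMod.valMinAbs_natAbs_eq_min, ZMod.val_one_eq_one_mod]
        exact (min_le_left _ _).trans (Nat.mod_le 1 n)
      rcases D.root_eq_or_of_adj huu' with h | ⟨-, -, h | h⟩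
      · simp [h]
      · rwa [h, add_sub_cancel_left]
      · rwa [h, sub_add_cancel_left, ZMod.natAbs_valMinAbs_neg]
    have hadd := ZMod.natAbs_valMinAbs_add_le (D.root v - D.root u') (D.root u' - D.root u)
    rw [sub_add_sub_cancel] at hadd
    rw [Walk.length_cons]
    exact hadd.trans ((Int.natAbs_add_le _ _).trans (add_le_add ih hstep))

lemma dist_cyc_le_val_sub (hG : G.Connected) (i j : ZMod n) :
    G.dist (cyc i) (cyc j) ≤ (j - i).val := by
  have hcast (k : ℕ) : G.dist (cyc i) (cyc (i + k)) ≤ k := by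
    induction k with
    | zero => simp
    | succ k ih =>
      have hadj := D.adj_succ (cyc (i + k))
      rw [D.succ_cyc, add_assoc, ← Nat.cast_succ] at hadj
      have := hG.dist_triangle (u := cyc i) (v := cyc (i + k)) (w := cyc (i + (k + 1 : ℕ)))
      rw [dist_eq_one_iff_adj.mpr hadj] at this
      omega
  simpa using hcast (j - i).val

lemma dist_cyc (hG : G.Connected) (i j : ZMod n) :
    G.dist (cyc i) (cyc j) = (j - i).valMinAbs.natAbs := by
  refine le_antisymm ?_ ?_
  · have hforward := D.dist_cyc_le_val_sub hG i j
    have hbackward := D.dist_cyc_le_val_sub hG j i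
    rw [dist_comm] at hbackward
    have hsum := val_sub_add_val_sub i j i
    rw [ZMod.valMinAbs_natAbs_eq_min]
    rw [sub_self, ZMod.val_zero] at hsum
    omega
  · obtain ⟨w, hw⟩ := hG.exists_walk_length_eq_dist (cyc i) (cyc j)
    simpa [hw] using D.natAbs_valMinAbs_root_sub_le_length w

lemma dist_cyc_of_le_half (hG : G.Connected) {i j : ZMod n} (h : 2 * (j - i).val ≤ n) :
    G.dist (cyc i) (cyc j) = (j - i).val := by
  rw [D.dist_cyc hG, ZMod.valMinAbs_natAbs_eq_min]
  omega

lemma lt_two_mul_of_isGPSet (hG : G.Connected) {S : Finset V} (hS : IsGPSet G S)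
    (hx : x ∈ S) (hy : y ∈ S) (hz : z ∈ S) (hxy : D.root x ≠ D.root y)
    (hyz : D.root y ≠ D.root z) (hxz : D.root x ≠ D.root z) (hdepth : D.depth y = 0) :
    n < 2 * ((D.root y - D.root x).val + (D.root z - D.root y).val) := by
  by_contra! hle
  have hsum : (D.root z - D.root x).val =
      (D.root y - D.root x).val + (D.root z - D.root y).val := by
    have := val_sub_add_val_sub (D.root z) (D.root y) (D.root x)
    omega
  refine hS x hx y hy z hz (ne_of_apply_ne _ hxy) (ne_of_apply_ne _ hyz)
    (ne_of_apply_ne _ hxz) ?_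
  have hself : G.dist y (cyc (D.root y)) = 0 := by rw [D.cyc_root hdepth, dist_self]
  have hself' : G.dist (cyc (D.root y)) y = 0 := by rw [dist_comm, hself]
  rw [D.dist_eq_of_root_ne hG hxy, D.dist_eq_of_root_ne hG hyz, D.dist_eq_of_root_ne hG hxz,
    D.dist_cyc_of_le_half hG (by omega), D.dist_cyc_of_le_half hG (by omega),
    D.dist_cyc_of_le_half hG (by omega), hsum, hself, hself']
  omega

lemma not_between_onCycle (hG : G.Connected) {S : Finset V} (hS : IsGPSet G S)
    (hinj : Set.InjOn D.root S) {s p q r : V} (hs : s ∈ S) (hp : p ∈ S) (hq : q ∈ S)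
    (hr : r ∈ S) (hsp : s ≠ p) (hp0 : D.depth p = 0) (hr0 : D.depth r = 0)
    (hpq : (D.root p - D.root s).val < (D.root q - D.root s).val) :
    ¬ (D.root q - D.root s).val < (D.root r - D.root s).val := by
  intro hqr
  have hne {x y : V} (h : (D.root x - D.root s).val < (D.root y - D.root s).val) :
      D.root x ≠ D.root y := fun heq => by rw [heq] at h; exact lt_irrefl _ h
  have hs0 : (D.root s - D.root s).val = 0 := by rw [sub_self, ZMod.val_zero]
  have hspq := D.lt_two_mul_of_isGPSet hG hS hs hp hq (hinj.ne hs hp hsp) (hne hpq)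
    (hne (by omega)) hp0
  have hqrs := D.lt_two_mul_of_isGPSet hG hS hq hr hs (hne hqr) (hne (by omega)).symm
    (hne (by omega)).symm hr0
  have := val_sub_add_val_sub (D.root q) (D.root p) (D.root s)
  have := val_sub_add_val_sub (D.root r) (D.root q) (D.root s)
  have := val_sub_add_val_sub (D.root s) (D.root r) (D.root s)
  have := ZMod.val_lt (D.root q - D.root p)
  have := ZMod.val_lt (D.root r - D.root q)
  have := ZMod.val_lt (D.root r - D.root s)
  omega

lemma card_onCycle_le_two (hG : G.Connected) {S : Finset V} (hS : IsGPSet G S)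
    (hinj : Set.InjOn D.root S) (hcard : 4 ≤ S.card) :
    (S.filter (D.depth · = 0)).card ≤ 2 := by
  classical
  by_contra! hthree
  obtain ⟨p, hp, q, hq, r, hr, hpq, hpr, hqr⟩ := Finset.two_lt_card.mp hthree
  obtain ⟨s, hs⟩ : (S \ {p, q, r}).Nonempty := by
    rw [← Finset.card_pos]
    have := Finset.le_card_sdiff {p, q, r} S
    have := Finset.card_le_three (a := p) (b := q) (c := r)
    omega
  simp only [Finset.mem_sdiff, Finset.mem_insert, Finset.mem_singleton, not_or] at hs
  obtain ⟨hsS, hsp, hsq, hsr⟩ := hs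
  rw [Finset.mem_filter] at hp hq hr
  let t (v : V) : ℕ := (D.root v - D.root s).val
  have hbetween {a b c : V} (ha : a ∈ S ∧ D.depth a = 0) (hb : b ∈ S) (hc : c ∈ S ∧ D.depth c = 0)
      (hsa : s ≠ a) : ¬ (t a < t b ∧ t b < t c) := fun h =>
    D.not_between_onCycle hG hS hinj hsS ha.1 hb hc.1 hsa ha.2 hc.2 h.1 h.2
  have hne {a b : V} (ha : a ∈ S) (hb : b ∈ S) (hab : a ≠ b) : t a ≠ t b := fun h =>
    hab (hinj ha hb (sub_left_injective (ZMod.val_injective n h)))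
  have := hne hp.1 hq.1 hpq
  have := hne hp.1 hr.1 hpr
  have := hne hq.1 hr.1 hqr
  have := hbetween hp hq.1 hr hsp
  have := hbetween hr hq.1 hp hsr
  have := hbetween hp hr.1 hq hsp
  have := hbetween hq hr.1 hp hsq
  have := hbetween hq hp.1 hr hsq
  have := hbetween hr hp.1 hq hsr
  omega

end CycleFlow

lemma IsRoving.injOn_root [DecidableEq V] {n : ℕ} {cyc : ZMod n → V}
    (D : CycleFlow G cyc) (hG : G.Connected) {S : Finset V} (hS : IsRoving G S)
    (hcard : 3 ≤ S.card) : Set.InjOn D.root S := by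
  intro a ha b hb h
  by_contra hab
  obtain ⟨d, hd⟩ : (S \ {a, b}).Nonempty := by
    rw [← Finset.card_pos]
    have := Finset.le_card_sdiff {a, b} S
    have := Finset.card_le_two (a := a) (b := b)
    omega
  simp only [Finset.mem_sdiff, Finset.mem_insert, Finset.mem_singleton, not_or] at hd
  obtain ⟨hdS, hda, hdb⟩ := hd
  obtain ⟨q, hqab, hqbd, hqad⟩ := D.exists_separates_of_root_eq h d
  refine hS.not_isHub hG q ⟨{a, b, d}, ?_, ?_, ?_⟩
  · simp only [Finset.insert_subset_iff, Finset.singleton_subset_iff]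
    exact ⟨ha, hb, hdS⟩
  · exact (Finset.card_eq_three.mpr ⟨a, b, d, hab, Ne.symm hda, Ne.symm hdb, rfl⟩).ge
  · simp only [Finset.coe_insert, Finset.coe_singleton, Set.pairwise_insert,
      Set.pairwise_singleton, Set.mem_insert_iff, Set.mem_singleton_iff, forall_eq_or_imp,
      forall_eq, true_and]
    exact ⟨fun _ => ⟨hqbd, hqbd.symm⟩, fun _ => ⟨hqab, hqab.symm⟩, fun _ => ⟨hqad, hqad.symm⟩⟩

end Geometry

section Leaning

variable {V : Type*} {G : SimpleGraph V}

namespace CycleFlow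

variable {m : ℕ} {cyc : ZMod (2 * m) → V} (D : CycleFlow G cyc) {S T : Finset V} {r u v y : V}
  {g : ZMod (2 * m)}

/-- A robot of `S` to be disregarded when the off-cycle robots are located: one on the cycle,
or an arbitrary one if there is none on the cycle. -/
def Spare (S : Finset V) (r : V) : Prop := r ∈ S ∧ (D.depth r = 0 ∨ ∀ w ∈ S, D.depth w ≠ 0)

/-- The roots of the off-cycle robots of `S` other than `r`. -/
def core (S : Finset V) (r : V) : Set (ZMod (2 * m)) :=
  D.root '' {w | w ∈ S ∧ D.depth w ≠ 0 ∧ w ≠ r}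

/-- Up to one spare robot, the off-cycle robots of `S` lie over less than half of the cycle, cut
open at `g`. This is the property of a configuration that cannot change during legal moves. -/
def Leans (g : ZMod (2 * m)) (S : Finset V) : Prop :=
  ∃ r, D.Spare S r ∧ ClusteredFrom g (D.core S r)

variable {D}

lemma Spare.depth_eq_zero (hr : D.Spare S r) (hy : y ∈ S) (hy0 : D.depth y = 0) :
    D.depth r = 0 :=
  hr.2.resolve_right fun h => h y hy hy0

section

variable [NeZero m]

lemma clusteredFrom_root_image (hG : G.Connected) (hS : IsGPSet G S)
    (hinj : Set.InjOn D.root S) (hy : y ∈ S) (hdepth : D.depth y = 0) :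
    ClusteredFrom (D.root y) (D.root '' {w | w ∈ S ∧ w ≠ y}) := by
  rintro _ ⟨x, ⟨hx, hxy⟩, rfl⟩ _ ⟨z, ⟨hz, hzy⟩, rfl⟩
  rcases eq_or_ne z x with rfl | hzx
  · exact Nat.lt_add_of_pos_right (NeZero.pos m)
  have hspread := D.lt_two_mul_of_isGPSet hG hS hz hy hx (hinj.ne hz hy hzy)
    (hinj.ne hy hx hxy.symm) (hinj.ne hz hx hzx) hdepth
  have hturn := val_sub_add_val_sub (D.root y) (D.root z) (D.root y)
  rw [sub_self, ZMod.val_zero] at hturn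
  omega

lemma leans_root (hG : G.Connected) (hS : IsGPSet G S) (hinj : Set.InjOn D.root S) (hy : y ∈ S)
    (hy0 : D.depth y = 0) : D.Leans (D.root y) S :=
  ⟨y, ⟨hy, .inl hy0⟩, (clusteredFrom_root_image hG hS hinj hy hy0).mono
    (Set.image_mono fun _ hw => ⟨hw.1, hw.2.2⟩)⟩

lemma Leans.or_antipode {p : ZMod (2 * m)} (hS : D.Leans p S) (g : ZMod (2 * m)) :
    D.Leans g S ∨ D.Leans (antipode g) S := by
  obtain ⟨r, hr, hcluster⟩ := hS
  exact (hcluster.from_or_from_antipode g).imp (⟨r, hr, ·⟩) (⟨r, hr, ·⟩)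

lemma exists_offCycle_subset (hG : G.Connected) (hS : IsGPSet G S)
    (hinj : Set.InjOn D.root S) (hcard : 4 ≤ S.card) {r' : V} (hr : D.Spare S r)
    (hr' : D.Spare S r') :
    ∃ Q ⊆ S, S.card ≤ Q.card + 2 ∧ ∀ w ∈ Q, D.depth w ≠ 0 ∧ w ≠ r ∧ w ≠ r' := by
  classical
  by_cases hon : ∃ y ∈ S, D.depth y = 0
  · obtain ⟨y, hy, hy0⟩ := hon
    refine ⟨S.filter (D.depth · ≠ 0), Finset.filter_subset _ S, ?_, fun w hw => ?_⟩
    · have := D.card_onCycle_le_two hG hS hinj hcard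
      have := Finset.card_filter_add_card_filter_not (s := S) (D.depth · = 0)
      simp only [ne_eq]
      omega
    · have hw0 : D.depth w ≠ 0 := (Finset.mem_filter.mp hw).2
      exact ⟨hw0, fun h => hw0 (h ▸ hr.depth_eq_zero hy hy0),
        fun h => hw0 (h ▸ hr'.depth_eq_zero hy hy0)⟩
  · push Not at hon
    refine ⟨S \ {r, r'}, Finset.sdiff_subset, ?_, fun w hw => ?_⟩
    · have := Finset.le_card_sdiff {r, r'} S
      have := Finset.card_le_two (a := r) (b := r')
      omega
    · simp only [Finset.mem_sdiff, Finset.mem_insert, Finset.mem_singleton, not_or] at hw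
      exact ⟨hon w hw.1, hw.2⟩

lemma Leans.not_antipode (hG : G.Connected) (hS : IsGPSet G S) (hinj : Set.InjOn D.root S)
    {K : ℕ} {B : Finset (ZMod (2 * m))} (hB : ∀ v, D.depth v ≠ 0 → D.root v ∈ B)
    (hg : halfCount B g ≤ K) (hg' : halfCount B (antipode g) ≤ K) (hK : 1 ≤ K)
    (hcard : K + 3 ≤ S.card) (hleans : D.Leans g S) : ¬ D.Leans (antipode g) S := by
  rintro ⟨r', hr', hcluster'⟩
  obtain ⟨r, hr, hcluster⟩ := hleans
  obtain ⟨Q, hQS, hQcard, hQ⟩ := exists_offCycle_subset hG hS hinj (by omega) hr hr'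
  have hsmall {p : ZMod (2 * m) → Prop} [DecidablePred p] (hp : (B.filter p).card ≤ K) :
      ∃ w ∈ Q, ¬ p (D.root w) := by
    by_contra! hall
    have hle := Finset.card_le_card_of_injOn (t := B.filter p) D.root
      (fun w hw => Finset.mem_filter.mpr ⟨hB w (hQ w hw).1, hall w hw⟩) (hinj.mono hQS)
    omega
  obtain ⟨a, ha, halow⟩ := hsmall (halfCount_antipode B g ▸ hg')
  obtain ⟨b, hb, hbhigh⟩ := hsmall hg
  rw [not_le] at halow
  rw [not_lt] at hbhigh
  have hcore : ClusteredFrom g (D.root '' Q) := hcluster.mono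
    (Set.image_mono fun w hw => ⟨hQS hw, (hQ w hw).1, (hQ w hw).2.1⟩)
  refine hcore.not_antipode ⟨a, ha, rfl⟩ ⟨b, hb, rfl⟩ halow hbhigh (hcluster'.mono ?_)
  exact Set.image_mono fun w hw => ⟨hQS hw, (hQ w hw).1, (hQ w hw).2.2⟩

end

variable [DecidableEq V]

lemma Leans.of_move_from_cycle (hS : D.Leans g S) (hu : u ∈ S) (hu0 : D.depth u = 0)
    (hv : D.Spare (insert v (S.erase u)) v) : D.Leans g (insert v (S.erase u)) := by
  obtain ⟨r, hr, hcluster⟩ := hS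
  refine ⟨v, hv, hcluster.mono (Set.image_mono fun w ⟨hw, hw0, hwv⟩ => ?_)⟩
  have hwS := Finset.mem_of_mem_erase (Finset.mem_of_mem_insert_of_ne hw hwv)
  exact ⟨hwS, hw0, fun h => hw0 (h ▸ hr.depth_eq_zero hu hu0)⟩

lemma Leans.of_move_to_cycle (hS : D.Leans g S) (hu0 : D.depth u ≠ 0) (hv0 : D.depth v = 0)
    (hy : y ∈ S) (hy0 : D.depth y = 0) : D.Leans g (insert v (S.erase u)) := by
  obtain ⟨r, hr, hcluster⟩ := hS
  have hr0 : D.depth r = 0 := hr.depth_eq_zero hy hy0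
  have hru : r ≠ u := fun h => hu0 (h ▸ hr0)
  refine ⟨r, ⟨Finset.mem_insert_of_mem (Finset.mem_erase.mpr ⟨hru, hr.1⟩), .inl hr0⟩,
    hcluster.mono (Set.image_mono fun w ⟨hw, hw0, hwr⟩ => ?_)⟩
  have hwv : w ≠ v := fun h => hw0 (h ▸ hv0)
  exact ⟨Finset.mem_of_mem_erase (Finset.mem_of_mem_insert_of_ne hw hwv), hw0, hwr⟩

lemma Leans.of_move_off_cycle (hS : D.Leans g S) (hu : u ∈ S) (huv : G.Adj u v)
    (hu0 : D.depth u ≠ 0) (hv0 : D.depth v ≠ 0) : D.Leans g (insert v (S.erase u)) := by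
  have hroot : D.root v = D.root u :=
    (D.root_eq_or_of_adj huv).resolve_right fun h => hu0 h.1
  obtain ⟨r, ⟨hrS, hr⟩, hcluster⟩ := hS
  have hstay {w : V} (hw : w ∈ insert v (S.erase u)) (hwv : w ≠ v) : w ≠ u ∧ w ∈ S :=
    Finset.mem_erase.mp (Finset.mem_of_mem_insert_of_ne hw hwv)
  refine ⟨if r = u then v else r, ⟨?_, ?_⟩, hcluster.mono ?_⟩
  · split_ifs with hru
    · exact Finset.mem_insert_self v _
    · exact Finset.mem_insert_of_mem (Finset.mem_erase.mpr ⟨hru, hrS⟩)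
  · refine hr.imp (fun hr0 => ?_) fun hoff w hw => ?_
    · have hru : r ≠ u := fun h => hu0 (h ▸ hr0)
      rwa [if_neg hru]
    · rcases eq_or_ne w v with rfl | hwv
      exacts [hv0, hoff w (hstay hw hwv).2]
  · rintro _ ⟨w, ⟨hw, hw0, hwr⟩, rfl⟩
    rcases eq_or_ne w v with rfl | hwv
    · refine ⟨u, ⟨hu, hu0, fun hur => hwr (if_pos hur.symm).symm⟩, hroot.symm⟩
    · obtain ⟨hwu, hwS⟩ := hstay hw hwv
      refine ⟨w, ⟨hwS, hw0, fun hwr' => hwr ?_⟩, rfl⟩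
      rw [if_neg (hwr' ▸ hwu), hwr']

lemma leans_imp_or_of_legalMove (h : LegalMove G S T) :
    (∀ g, D.Leans g S → D.Leans g T) ∨
      (∀ g, D.Leans g T → D.Leans g S) ∧ ∃ y ∈ T, D.depth y = 0 := by
  obtain ⟨u, hu, v, hv, huv, hT, -⟩ := h
  have hS : S = insert u (T.erase v) := by
    rw [hT, Finset.erase_insert (by simp [hv]), Finset.insert_erase hu]
  have hvT : v ∈ T := hT ▸ Finset.mem_insert_self v _
  by_cases hu0 : D.depth u = 0
  · by_cases hspare : D.Spare T v
    · exact .inl fun g hg => hT ▸ hg.of_move_from_cycle hu hu0 (hT ▸ hspare)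
    · simp only [Spare, hvT, true_and, not_or, not_forall, not_not] at hspare
      obtain ⟨hv0, y, hy, hy0⟩ := hspare
      exact .inr ⟨fun g hg => hS ▸ hg.of_move_to_cycle hv0 hu0 hy hy0, y, hy, hy0⟩
  · by_cases hv0 : D.depth v = 0
    · by_cases hon : ∃ y ∈ S, D.depth y = 0
      · obtain ⟨y, hy, hy0⟩ := hon
        exact .inl fun g hg => hT ▸ hg.of_move_to_cycle hu0 hv0 hy hy0
      · push Not at hon
        refine .inr ⟨fun g hg => ?_, v, hvT, hv0⟩
        rw [hS]
        exact hg.of_move_from_cycle hvT hv0 (hS ▸ ⟨hu, .inr hon⟩)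
    · exact .inl fun g hg => hT ▸ hg.of_move_off_cycle hu huv hu0 hv0

end CycleFlow

lemma IsRoving.card_le [DecidableEq V] {m : ℕ} [NeZero m] {cyc : ZMod (2 * m) → V}
    (D : CycleFlow G cyc) (hG : G.Connected) {K : ℕ} (hK : 1 ≤ K) {B : Finset (ZMod (2 * m))}
    (hBK : B.card ≤ 2 * K) (hB : ∀ v, D.depth v ≠ 0 → D.root v ∈ B) {S : Finset V}
    (hS : IsRoving G S) : S.card ≤ K + 2 := by
  by_contra! hcard
  obtain ⟨g, hg, hg'⟩ := exists_halfCount_le B hBK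
  have hinj {T : Finset V} (hT : IsRoving G T) (hTS : T.card = S.card) :
      Set.InjOn D.root T := hT.injOn_root D hG (by omega)
  have hexcl {T : Finset V} (hT : IsRoving G T) (hTS : T.card = S.card) (hTg : D.Leans g T) :
      ¬ D.Leans (antipode g) T :=
    hTg.not_antipode hG hT.isGPSet (hinj hT hTS) hB hg hg' hK (by omega)
  have hleans {T : Finset V} (hT : IsRoving G T) (hTS : T.card = S.card) {y : V} (hy : y ∈ T)
      (hy0 : D.depth y = 0) : D.Leans (D.root y) T :=
    CycleFlow.leans_root hG hT.isGPSet (hinj hT hTS) hy hy0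
  have hstep (T R : Finset V) (hT : IsRoving G T) (h : LegalMove G T R)
      (hTg : T.card = S.card ∧ D.Leans g T) : R.card = S.card ∧ D.Leans g R := by
    have hRS : R.card = S.card := h.card_eq.trans hTg.1
    refine ⟨hRS, ?_⟩
    rcases CycleFlow.leans_imp_or_of_legalMove h with hforward | ⟨hbackward, y, hy, hy0⟩
    · exact hforward g hTg.2
    · refine ((hleans (hT.of_legalMove h) hRS hy hy0).or_antipode g).resolve_right fun hR => ?_
      exact hexcl hT hTg.1 hTg.2 (hbackward _ hR)
  obtain ⟨T, hT, hTS, hgT⟩ := hS.exists_isRoving_mem (P := fun T => T.card = S.card)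
    (fun _ _ _ h hT => h.card_eq.trans hT) rfl (cyc g)
  obtain ⟨R, hR, ⟨hRS, hRg⟩, hgR⟩ := hT.exists_isRoving_mem hstep
    ⟨hTS, D.root_cyc g ▸ hleans hT hTS hgT (D.depth_cyc g)⟩ (cyc (antipode g))
  exact hexcl hR hRS hRg (D.root_cyc (antipode g) ▸ hleans hR hRS hgR (D.depth_cyc _))

end Leaning

theorem stmt13_general {V : Type*} [Fintype V] [DecidableEq V] (G : SimpleGraph V)
    [DecidableRel G.Adj] (hG : G.Connected)
    (hedges : G.edgeFinset.card = Fintype.card V)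
    {v₀ : V} (c : G.Walk v₀ v₀) (hc : c.IsCycle)
    (ℓ k : ℕ) (hℓ : c.length = ℓ)
    (hk : k = (c.support.toFinset.filter (fun u => 3 ≤ G.degree u)).card)
    (hk1 : 1 ≤ k) (hℓeven : Even ℓ) :
    mob G ≤ (k + 1) / 2 + 2 := by
  obtain ⟨m, rfl⟩ := hℓeven.exists_two_nsmul
  rw [smul_eq_mul] at hℓ
  have hthree := hc.three_le_length
  have : NeZero m := ⟨by omega⟩
  obtain ⟨cyc, hinj, hadj, hrange⟩ := exists_cyclic_parametrization hc hℓ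
  obtain ⟨D⟩ := nonempty_cycleFlow hG hedges.le (hℓ ▸ hthree) hinj hadj
  let B : Finset (ZMod (2 * m)) := Finset.univ.filter fun i => 3 ≤ G.degree (cyc i)
  have hB : B.card ≤ k := by
    rw [hk]
    refine Finset.card_le_card_of_injOn cyc (fun i hi => ?_) hinj.injOn
    have hi' : cyc i ∈ c.support := hrange.le ⟨i, rfl⟩
    simpa [hi'] using (Finset.mem_filter.mp hi).2
  refine csSup_le' ?_
  rintro _ ⟨S, hS, rfl⟩
  exact hS.isRoving.card_le D hG (by omega) (B := B) (by omega) fun v hv =>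
    Finset.mem_filter.mpr ⟨Finset.mem_univ _, D.three_le_degree (hℓ ▸ hthree) hv⟩

/-- Let `G` be a connected unicyclic graph (connected with as many edges as
vertices) whose unique cycle `c` has length `ℓ`, and suppose exactly `k ≥ 2`
vertices of the cycle have degree at least 3 in `G`. If both `k` and `ℓ` are
even, then `mob(G) ≤ k / 2 + 2`. -/
theorem stmt13 {V : Type*} [Fintype V] [DecidableEq V] (G : SimpleGraph V)
    [DecidableRel G.Adj] (hG : G.Connected)
    (hedges : G.edgeFinset.card = Fintype.card V)
    {v₀ : V} (c : G.Walk v₀ v₀) (hc : c.IsCycle)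
    (ℓ k : ℕ) (hℓ : c.length = ℓ)
    (hk : k = (c.support.toFinset.filter (fun u => 3 ≤ G.degree u)).card)
    (hk2 : 2 ≤ k) (hkeven : Even k) (hℓeven : Even ℓ) :
    mob G ≤ k / 2 + 2 := by
  obtain ⟨j, hj⟩ := hkeven
  have h := stmt13_general G hG hedges c hc ℓ k hℓ hk (by omega) hℓeven
  omega
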